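/- For all integers n ≥ 1 and 1 ≤ i ≤ n, the number of little Schröder paths of semi-length n with exactly i up steps equals (1/(n+1))·C(n+i, i)·C(n−1, i−1). -/

import Mathlib

/-- Schröder steps are encoded by `Fin 3`: `0` is an up step `u = (1,1)`,
`1` is a down step `d = (1,-1)`, and `2` is a horizontal step `h = (2,0)`. -/
def IsLargeSchroeder (l : List (Fin 3)) : Prop :=
  l.count 0 = l.count 1 ∧ ∀ p, p <+: l → p.count 1 ≤ p.count 0

/-- A little Schröder path: a large Schröder path with no horizontal step at
height `0`, i.e. every `h` step is preceded by strictly more `u`'s than `d`'s. -/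
def IsLittleSchroeder (l : List (Fin 3)) : Prop :=
  IsLargeSchroeder l ∧ ∀ p q, l = p ++ (2 : Fin 3) :: q → p.count 1 < p.count 0

/-- The semi-length of a Schröder word: number of `u` steps plus number of `h` steps. -/
def schroederSemiLength (l : List (Fin 3)) : ℕ := l.count 0 + l.count 2

open Nat in
/-- closed form -/
def schF : ℕ → ℕ → ℕ → ℚ
  | 0, 0, m => if m = 0 then 1 else 0
  | 0, j+1, m => ((j + m)! : ℚ) / (m ! * (j+1)!) * ((2*j+2+m)! / ((j+1)! * (j+m+2)!)) * (j+1)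
  | k+1, j, m => ((j+k+m)! : ℚ) / (m ! * (j+k+1)!) * ((2*j+m+k+1)! / (j ! * (j+k+m+2)!)) *
      ((k+1) * (j+m+k+2) + j)

def schV : ℕ → List (Fin 3) → Prop
  | k, [] => k = 0
  | k, a :: l => (a = 0 ∧ schV (k+1) l) ∨ (a = 1 ∧ 0 < k ∧ schV (k-1) l) ∨ (a = 2 ∧ 0 < k ∧ schV k l)

def schT (k j m : ℕ) : Set (List (Fin 3)) := {l | schV k l ∧ l.count 0 = j ∧ l.count 2 = m}

theorem schV_iff (l : List (Fin 3)) : ∀ k, schV k l ↔ (k + l.count 0 = l.count 1 ∧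
    (∀ p, p <+: l → p.count 1 ≤ k + p.count 0) ∧
    ∀ p q, l = p ++ (2 : Fin 3) :: q → p.count 1 < k + p.count 0) := by
  induction l with
  | nil => intro k; simp [schV]
  | cons a l ih =>
    intro k
    have hpre : (∀ p, p <+: a :: l → p.count 1 ≤ k + p.count 0) ↔
        ∀ p, p <+: l → (a :: p).count 1 ≤ k + (a :: p).count 0 := by
      constructor
      · intro h p hp
        exact h _ (by simpa using hp)
      · intro h p hp
        rcases p with _ | ⟨b, p⟩
        · simp
        · rw [List.cons_prefix_cons] at hp
          obtain ⟨rfl, hp⟩ := hp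
          exact h p hp
    have hh : (∀ p q, a :: l = p ++ (2 : Fin 3) :: q → p.count 1 < k + p.count 0) ↔
        ((a = 2 → 0 < k) ∧ ∀ p q, l = p ++ (2 : Fin 3) :: q →
          (a :: p).count 1 < k + (a :: p).count 0) := by
      constructor
      · intro h
        refine ⟨fun ha => by simpa using h [] l (by simp [ha]), fun p q hp => h (a :: p) q (by simp [hp])⟩
      · rintro ⟨h1, h2⟩ p q hp
        rcases p with _ | ⟨b, p⟩
        · simp at hp ⊢; exact h1 hp.1
        · simp at hp
          obtain ⟨rfl, hp⟩ := hp
          exact h2 p q hp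
    rw [hpre, hh]
    have hnil := List.nil_prefix (l := l)
    fin_cases a
    · simp [schV, ih, List.count_cons]
      simp only [add_assoc, add_comm 1]
    · rcases k with _ | k
      · simp [schV, List.count_cons]
        intro _ h
        have := h [] (by simp)
        simp at this
      · simp [schV, ih, List.count_cons]
        simp only [add_right_comm k 1, Nat.add_lt_add_iff_right, Nat.add_right_cancel_iff, Nat.lt_succ_iff]
        exact Iff.rfl
    · rcases k with _ | k
      · simp [schV]
      · simp [schV, ih, List.count_cons]

theorem schT_split (k j m : ℕ) (h : ¬ (k = 0 ∧ j = 0 ∧ m = 0)) (A B C : Set (List (Fin 3)))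
    (hA : A = {l | 0 :: l ∈ schT k j m}) (hB : B = {l | 1 :: l ∈ schT k j m})
    (hC : C = {l | 2 :: l ∈ schT k j m}) (fA : A.Finite) (fB : B.Finite) (fC : C.Finite) :
    (schT k j m).Finite ∧ (schT k j m).ncard = A.ncard + B.ncard + C.ncard := by
  have key : schT k j m = (List.cons 0 '' A ∪ List.cons 1 '' B) ∪ List.cons 2 '' C := by
    ext l
    rcases l with _ | ⟨a, l⟩
    · simp [schT, schV]; tauto
    · subst hA hB hC
      fin_cases a <;> simp
  have inj : ∀ a : Fin 3, Function.Injective (List.cons a) := fun a x y h => by simpa using h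
  constructor
  · rw [key]; exact ((fA.image _).union (fB.image _)).union (fC.image _)
  · rw [key, Set.ncard_union_eq ?_ ((fA.image _).union (fB.image _)) (fC.image _),
      Set.ncard_union_eq ?_ (fA.image _) (fB.image _), Set.ncard_image_of_injective _ (inj _),
      Set.ncard_image_of_injective _ (inj _), Set.ncard_image_of_injective _ (inj _)]
    · rw [Set.disjoint_left]; rintro _ ⟨x, _, rfl⟩ ⟨y, _, h⟩; simp at h
    · rw [Set.disjoint_left]; rintro _ (⟨x, _, rfl⟩ | ⟨x, _, rfl⟩) ⟨y, _, h⟩ <;> simp at h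

theorem schA0 (k m : ℕ) : {l | 0 :: l ∈ schT k 0 m} = ∅ := by
  ext; simp [schT]
theorem schA1 (k j m : ℕ) : {l | 0 :: l ∈ schT k (j+1) m} = schT (k+1) j m := by
  ext; simp [schT, schV, List.count_cons]
theorem schB0 (j m : ℕ) : {l | 1 :: l ∈ schT 0 j m} = ∅ := by
  ext; simp [schT, schV]
theorem schB1 (k j m : ℕ) : {l | 1 :: l ∈ schT (k+1) j m} = schT k j m := by
  ext; simp [schT, schV, List.count_cons]
theorem schC0 (j m : ℕ) : {l | 2 :: l ∈ schT 0 j m} = ∅ := by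
  ext; simp [schT, schV]
theorem schC1 (k j : ℕ) : {l | 2 :: l ∈ schT k j 0} = ∅ := by
  ext; simp [schT]
theorem schC2 (k j m : ℕ) : {l | 2 :: l ∈ schT (k+1) j (m+1)} = schT (k+1) j m := by
  ext; simp [schT, schV, List.count_cons]

open Nat in
theorem schF_0 (j m : ℕ) : schF 0 (j+1) m = schF 1 j m := by
  have e : 2*j+2+m = (2*j+m+1)+1 := by ring
  simp only [schF, e, Nat.factorial_succ, add_zero]
  push_cast
  have := Nat.factorial_ne_zero
  field_simp
  ring

open Nat in
theorem schF_10 (m : ℕ) : schF 1 0 m = 1 := by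
  simp only [schF, Nat.factorial_succ, zero_add, mul_zero, add_zero, Nat.factorial_zero]
  push_cast
  have := Nat.factorial_ne_zero
  field_simp
  ring

open Nat in
theorem schF_k00 (k : ℕ) : schF (k+1) 0 0 = 1 := by
  simp only [schF, Nat.factorial_succ, zero_add, mul_zero, add_zero, Nat.factorial_zero]
  push_cast
  have := Nat.factorial_ne_zero
  field_simp
  ring

open Nat in
theorem schF_k0 (k m : ℕ) : schF (k+2) 0 (m+1) = schF (k+1) 0 (m+1) + schF (k+2) 0 m := by
  have e1 : k+1+(m+1) = (k+m)+1+1 := by ring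
  have e2 : k+(m+1) = (k+m)+1 := by ring
  have e3 : m+1+(k+1) = (k+m)+1+1 := by ring
  have e4 : m+1+k = (k+m)+1 := by ring
  have e5 : m+(k+1) = (k+m)+1 := by ring
  have e6 : k+1+m = (k+m)+1 := by ring
  simp only [schF, zero_add, mul_zero, e1, e2, e3, e4, e5, e6, Nat.factorial_succ]
  push_cast
  have := Nat.factorial_ne_zero
  field_simp
  ring

open Nat in
theorem schF_1j0 (j : ℕ) : schF 1 (j+1) 0 = schF 2 j 0 + schF 0 (j+1) 0 := by
  have e1 : 2*(j+1) = 2*j+1+1 := by ring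
  simp only [schF, zero_add, mul_zero, add_zero, e1, Nat.factorial_succ]
  push_cast
  have := Nat.factorial_ne_zero
  field_simp
  ring

open Nat in
theorem schF_1j (j m : ℕ) : schF 1 (j+1) (m+1) = schF 2 j (m+1) + schF 0 (j+1) (m+1) + schF 1 (j+1) m := by
  have e1 : j+1+m = j+m+1 := by ring
  have e2 : j+1+(m+1) = j+m+1+1 := by ring
  have e3 : j+(m+1) = j+m+1 := by ring
  have e4 : 2*(j+1)+m = 2*j+m+1+1 := by ring
  have e5 : 2*(j+1)+(m+1) = 2*j+m+1+1+1 := by ring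
  have e6 : 2*j+2+(m+1) = 2*j+m+1+1+1 := by ring
  have e7 : 2*j+(m+1) = 2*j+m+1 := by ring
  simp only [schF, zero_add, add_zero, e1, e2, e3, e4, e5, e6, e7, Nat.factorial_succ]
  push_cast
  have := Nat.factorial_ne_zero
  field_simp
  ring

open Nat in
theorem schF_kj0 (k j : ℕ) : schF (k+2) (j+1) 0 = schF (k+3) j 0 + schF (k+1) (j+1) 0 := by
  have e1 : j+1+(k+1) = j+k+1+1 := by ring
  have e2 : j+1+k = j+k+1 := by ring
  have e3 : j+(k+2) = j+k+1+1 := by ring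
  have e4 : 2*(j+1)+(k+1) = 2*j+k+1+1+1 := by ring
  have e5 : 2*(j+1)+k = 2*j+k+1+1 := by ring
  have e6 : 2*j+(k+2) = 2*j+k+1+1 := by ring
  simp only [schF, add_zero, e1, e2, e3, e4, e5, e6, Nat.factorial_succ]
  push_cast
  have := Nat.factorial_ne_zero
  field_simp
  ring

open Nat in
theorem schF_kj (k j m : ℕ) : schF (k+2) (j+1) (m+1) =
    schF (k+3) j (m+1) + schF (k+1) (j+1) (m+1) + schF (k+2) (j+1) m := by
  have e1 : j+1+(k+1) = j+k+1+1 := by ring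
  have e2 : j+1+k = j+k+1 := by ring
  have e3 : j+(k+2) = j+k+1+1 := by ring
  have a1 : j+k+1+1+(m+1) = j+k+m+1+1+1 := by ring
  have a2 : j+k+1+1+m = j+k+m+1+1 := by ring
  have a3 : j+k+1+(m+1) = j+k+m+1+1 := by ring
  have e4 : 2*(j+1)+(m+1)+(k+1) = 2*j+k+m+1+1+1+1 := by ring
  have e5 : 2*(j+1)+(m+1)+k = 2*j+k+m+1+1+1 := by ring
  have e6 : 2*j+(m+1)+(k+2) = 2*j+k+m+1+1+1 := by ring
  have e7 : 2*(j+1)+m+(k+1) = 2*j+k+m+1+1+1 := by ring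
  simp only [schF, e1, e2, e3, a1, a2, a3, e4, e5, e6, e7, Nat.factorial_succ]
  push_cast
  have := Nat.factorial_ne_zero
  field_simp
  ring

theorem schT_card (N : ℕ) : ∀ k j m, 2*j+m+k = N →
    (schT k j m).Finite ∧ ((schT k j m).ncard : ℚ) = schF k j m := by
  induction N using Nat.strong_induction_on with
  | _ N ih =>
  intro k j m hN
  have fe := Set.finite_empty (α := List (Fin 3))
  have IH : ∀ k j m, 2*j+m+k < N →
    (schT k j m).Finite ∧ ((schT k j m).ncard : ℚ) = schF k j m := fun k j m h => ih _ h k j m rfl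
  clear ih
  rcases k with _ | k
  · rcases j with _ | j
    · rcases m with _ | m
      · have : schT 0 0 0 = {[]} := by
          ext l
          rcases l with _ | ⟨a, l⟩
          · simp [schT, schV]
          · fin_cases a <;> simp [schT, schV]
        rw [this]; simp [schF]
      · obtain ⟨h1, h2⟩ := schT_split 0 0 (m+1) (by simp) _ _ _ (schA0 _ _).symm (schB0 _ _).symm
          (schC0 _ _).symm fe fe fe
        refine ⟨h1, ?_⟩
        rw [h2]; simp [schF]
    · obtain ⟨f1, c1⟩ := IH 1 j m (by omega)
      obtain ⟨h1, h2⟩ := schT_split 0 (j+1) m (by simp) _ _ _ (schA1 _ _ _).symm (schB0 _ _).symm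
          (schC0 _ _).symm f1 fe fe
      refine ⟨h1, ?_⟩
      rw [h2, schF_0, ← c1]; simp
  · obtain ⟨fB, cB⟩ := IH k j m (by omega)
    rcases j with _ | j
    · rcases m with _ | m
      · obtain ⟨h1, h2⟩ := schT_split (k+1) 0 0 (by simp) _ _ _ (schA0 _ _).symm (schB1 _ _ _).symm
          (schC1 _ _).symm fe fB fe
        refine ⟨h1, ?_⟩
        rw [h2, schF_k00]; push_cast; rw [cB]
        rcases k with _ | k
        · simp [schF]
        · simp [schF_k00]
      · obtain ⟨fC, cC⟩ := IH (k+1) 0 m (by omega)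
        obtain ⟨h1, h2⟩ := schT_split (k+1) 0 (m+1) (by simp) _ _ _ (schA0 _ _).symm
          (schB1 _ _ _).symm (schC2 _ _ _).symm fe fB fC
        refine ⟨h1, ?_⟩
        rw [h2]; push_cast; rw [cB, cC]
        rcases k with _ | k
        · simp [schF_10]; simp [schF]
        · simp [schF_k0]
    · obtain ⟨fA, cA⟩ := IH (k+2) j m (by omega)
      rcases m with _ | m
      · obtain ⟨h1, h2⟩ := schT_split (k+1) (j+1) 0 (by simp) _ _ _ (schA1 _ _ _).symm
          (schB1 _ _ _).symm (schC1 _ _).symm fA fB fe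
        refine ⟨h1, ?_⟩
        rw [h2]; push_cast; rw [cA, cB]
        rcases k with _ | k
        · simp [schF_1j0]
        · simp [schF_kj0]
      · obtain ⟨fC, cC⟩ := IH (k+1) (j+1) m (by omega)
        obtain ⟨h1, h2⟩ := schT_split (k+1) (j+1) (m+1) (by simp) _ _ _ (schA1 _ _ _).symm
          (schB1 _ _ _).symm (schC2 _ _ _).symm fA fB fC
        refine ⟨h1, ?_⟩
        rw [h2]; push_cast; rw [cA, cB, cC]
        rcases k with _ | k
        · simp [schF_1j]
        · simp [schF_kj]

/-- For all integers `n ≥ 1` and `1 ≤ i ≤ n`, the number of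
little Schröder paths of semi-length `n` with exactly `i` up steps equals
`(1/(n+1)) * C(n+i, i) * C(n-1, i-1)`. -/
theorem stmt_11 (n i : ℕ) (hn : 1 ≤ n) (hi : 1 ≤ i) (hin : i ≤ n) :
    (Nat.card {l : List (Fin 3) // IsLittleSchroeder l ∧
        schroederSemiLength l = n ∧ l.count 0 = i} : ℚ) =
      (1 / (n + 1)) * Nat.choose (n + i) i * Nat.choose (n - 1) (i - 1) := by
  obtain ⟨j, rfl⟩ : ∃ j, i = j + 1 := ⟨i - 1, by omega⟩
  obtain ⟨m, rfl⟩ : ∃ m, n = j + 1 + m := ⟨n - (j + 1), by omega⟩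
  have hs : {l : List (Fin 3) | IsLittleSchroeder l ∧
        schroederSemiLength l = j + 1 + m ∧ l.count 0 = j + 1} = schT 0 (j+1) m := by
    ext l
    simp only [schT, Set.mem_setOf_eq, schV_iff, IsLittleSchroeder, IsLargeSchroeder,
      schroederSemiLength, zero_add, and_assoc]
    constructor
    · rintro ⟨a, b, c, d, e⟩; exact ⟨a, b, c, e, by omega⟩
    · rintro ⟨a, b, c, d, e⟩; exact ⟨a, b, c, by omega, d⟩
  have hc := (schT_card _ 0 (j+1) m rfl).2
  rw [← hs] at hc
  have : Nat.card {l : List (Fin 3) // IsLittleSchroeder l ∧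
        schroederSemiLength l = j + 1 + m ∧ l.count 0 = j + 1} = Set.ncard {l : List (Fin 3) | IsLittleSchroeder l ∧
        schroederSemiLength l = j + 1 + m ∧ l.count 0 = j + 1} := rfl
  rw [this, hc, Nat.cast_choose ℚ (by omega), Nat.cast_choose ℚ (by omega)]
  have e1 : j + 1 + m + (j + 1) - (j + 1) = j + m + 1 := by omega
  have e2 : j + 1 + m - 1 - (j + 1 - 1) = m := by omega
  have e3 : j + 1 + m - 1 = j + m := by omega
  have e4 : j + 1 - 1 = j := by omega
  have e5 : j + 1 + m + (j + 1) = 2*j+m+1+1 := by ring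
  have e6 : 2*j+2+m = 2*j+m+1+1 := by ring
  rw [e1, e2, e3, e4, e5]
  simp only [schF, e6, Nat.factorial_succ]
  push_cast
  have := Nat.factorial_ne_zero
  field_simp
  ring
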